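/- arXiv:1202.5127 — 2 statements merged into one kernel-verified Lean document; each statement's English description precedes it below -/
import Mathlib

section
/- Let P be a finite set of points in the plane and let a, b ∈ P be a closest pair in the L∞-metric, i.e., a ≠ b and ‖a − b‖∞ ≤ ‖u − v‖∞ for all distinct u, v ∈ P. Then (a, b) is an edge of the L∞-Delaunay graph of P: there exist c ∈ ℝ² and r > 0 with ‖a − c‖∞ = ‖b − c‖∞ = r and ‖p − c‖∞ ≥ r for every p ∈ P. Consequently d_T(a, b) = ‖a − b‖₂ ≤ |a₁ − b₁| + |a₂ − b₂|. -/
open Real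

noncomputable section

/-- The `L∞` norm of a point of the plane. -/
def linf (u : ℝ × ℝ) : ℝ := max |u.1| |u.2|

/-- The `L₁` norm of a point of the plane. -/
def l1 (u : ℝ × ℝ) : ℝ := |u.1| + |u.2|

/-- The Euclidean (`L₂`) norm of a point of the plane. -/
def l2 (u : ℝ × ℝ) : ℝ := Real.sqrt (u.1 ^ 2 + u.2 ^ 2)

/-- `u` and `v` are joined by an edge of the Delaunay graph of `P` with respect to the
norm `N`: they are distinct and there is an `N`-ball (of positive radius) having both on
its boundary and no point of `P` in its interior. -/
def IsDelaunayEdge (N : ℝ × ℝ → ℝ) (P : Finset (ℝ × ℝ)) (u v : ℝ × ℝ) : Prop :=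
  u ≠ v ∧ ∃ (c : ℝ × ℝ) (r : ℝ), 0 < r ∧ N (u - c) = r ∧ N (v - c) = r ∧
    ∀ p ∈ P, r ≤ N (p - c)

/-- `L` is the total Euclidean length of some finite path from `a` to `b` all of whose
edges are edges of the `N`-Delaunay graph of `P`. -/
def IsPathLength (N : ℝ × ℝ → ℝ) (P : Finset (ℝ × ℝ)) (a b : ℝ × ℝ) (L : ℝ) : Prop :=
  ∃ (n : ℕ) (p : Fin (n + 1) → ℝ × ℝ), p 0 = a ∧ p (Fin.last n) = b ∧
    (∀ i : Fin n, IsDelaunayEdge N P (p i.castSucc) (p i.succ)) ∧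
    L = ∑ i : Fin n, l2 (p i.succ - p i.castSucc)

/-- The graph distance between `a` and `b` in the `N`-Delaunay graph of `P`:
the infimum of Euclidean path lengths. -/
def dT (N : ℝ × ℝ → ℝ) (P : Finset (ℝ × ℝ)) (a b : ℝ × ℝ) : ℝ :=
  sInf {L : ℝ | IsPathLength N P a b L}

/-- `P` is in general position for the `L∞`-metric: no four points of `P` lie on the
boundary of a common axis-aligned square, and no two points share an `x`- or a
`y`-coordinate. -/
def GenPosInf (P : Finset (ℝ × ℝ)) : Prop :=
  (∀ (c : ℝ × ℝ) (r : ℝ), (P.filter (fun p => linf (p - c) = r)).card ≤ 3) ∧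
  (∀ u ∈ P, ∀ v ∈ P, u ≠ v → u.1 ≠ v.1 ∧ u.2 ≠ v.2)

/-- `P` is in general position for the `L₁`-metric: no four points of `P` lie on the
boundary of a common `L₁`-ball, and no two points have equal coordinate sums or equal
coordinate differences. -/
def GenPos1 (P : Finset (ℝ × ℝ)) : Prop :=
  (∀ (c : ℝ × ℝ) (r : ℝ), (P.filter (fun p => l1 (p - c) = r)).card ≤ 3) ∧
  (∀ u ∈ P, ∀ v ∈ P, u ≠ v → u.1 + u.2 ≠ v.1 + v.2 ∧ u.1 - u.2 ≠ v.1 - v.2)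

lemma l2_eq_norm (u : ℝ × ℝ) : l2 u = ‖(⟨u.1, u.2⟩ : ℂ)‖ := by
  rw [Complex.norm_def, Complex.normSq_mk, l2]
  congr 1
  ring

lemma l2_tri (u v w : ℝ × ℝ) : l2 (w - u) ≤ l2 (v - u) + l2 (w - v) := by
  simp only [l2_eq_norm]
  refine le_trans (le_of_eq ?_) (norm_add_le _ _)
  congr 1
  apply Complex.ext <;> simp

lemma l2_path (n : ℕ) (p : Fin (n + 1) → ℝ × ℝ) :
    l2 (p (Fin.last n) - p 0) ≤ ∑ i : Fin n, l2 (p i.succ - p i.castSucc) := by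
  induction n with
  | zero => simp [l2]
  | succ n ih =>
    rw [Fin.sum_univ_castSucc]
    have h := ih (fun i => p i.castSucc)
    have h2 := l2_tri (p 0) (p (Fin.last n).castSucc) (p (Fin.last (n + 1)))
    simp only [Fin.castSucc_zero, Fin.succ_castSucc, Fin.succ_last] at h h2 ⊢
    exact h2.trans (by gcongr)

lemma l2_comm (u v : ℝ × ℝ) : l2 (u - v) = l2 (v - u) := by
  simp only [l2, Prod.fst_sub, Prod.snd_sub]
  congr 1
  ring

lemma linf_tri (u v : ℝ × ℝ) : linf (u + v) ≤ linf u + linf v := by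
  simp only [linf, Prod.fst_add, Prod.snd_add]
  apply max_le
  · exact (abs_add_le _ _).trans (add_le_add (le_max_left _ _) (le_max_left _ _))
  · exact (abs_add_le _ _).trans (add_le_add (le_max_right _ _) (le_max_right _ _))

lemma linf_neg (u : ℝ × ℝ) : linf (-u) = linf u := by
  simp [linf]

lemma linf_half (u : ℝ × ℝ) : linf ((1 / 2 : ℝ) • u) = linf u / 2 := by
  simp only [linf, Prod.smul_fst, Prod.smul_snd, smul_eq_mul, abs_mul]
  rw [← mul_max_of_nonneg _ _ (abs_nonneg _), abs_of_pos (by norm_num)]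
  ring

lemma linf_pos (u : ℝ × ℝ) (hu : u ≠ 0) : 0 < linf u := by
  simp only [linf, lt_max_iff, abs_pos]
  by_contra! h
  exact hu (Prod.ext h.1 h.2)

lemma edge_aux
    (P : Finset (ℝ × ℝ)) (a b : ℝ × ℝ) (ha : a ∈ P) (hab : a ≠ b)
    (hmin : ∀ u ∈ P, ∀ v ∈ P, u ≠ v → linf (a - b) ≤ linf (u - v)) :
    IsDelaunayEdge linf P a b := by
  have h1 : a - (1 / 2 : ℝ) • (a + b) = (1 / 2 : ℝ) • (a - b) := by module
  have h2 : b - (1 / 2 : ℝ) • (a + b) = -((1 / 2 : ℝ) • (a - b)) := by module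
  have hA : linf (a - (1 / 2 : ℝ) • (a + b)) = linf (a - b) / 2 := by rw [h1, linf_half]
  refine ⟨hab, (1 / 2 : ℝ) • (a + b), linf (a - b) / 2,
    half_pos (linf_pos _ (sub_ne_zero.2 hab)), hA, by rw [h2, linf_neg, linf_half], ?_⟩
  intro p hp
  by_cases hpa : p = a
  · rw [hpa, hA]
  · have h3 := hmin p hp a ha hpa
    have h4 := linf_tri (p - (1 / 2 : ℝ) • (a + b)) (-(a - (1 / 2 : ℝ) • (a + b)))
    rw [linf_neg, hA] at h4
    have h5 : p - (1 / 2 : ℝ) • (a + b) + -(a - (1 / 2 : ℝ) • (a + b)) = p - a := by module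
    rw [h5] at h4
    linarith

/-- **Lemma (base case).** A closest pair of `P` in the `L∞`-metric is an edge of the
`L∞`-Delaunay graph of `P`, and its graph distance equals its Euclidean distance,
which is at most `|a₁ − b₁| + |a₂ − b₂|`. -/
theorem closest_pair_is_edge
    (P : Finset (ℝ × ℝ)) (a b : ℝ × ℝ) (ha : a ∈ P) (hb : b ∈ P) (hab : a ≠ b)
    (hmin : ∀ u ∈ P, ∀ v ∈ P, u ≠ v → linf (a - b) ≤ linf (u - v)) :
    IsDelaunayEdge linf P a b ∧
    dT linf P a b = l2 (a - b) ∧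
    l2 (a - b) ≤ |a.1 - b.1| + |a.2 - b.2| := by
  have he := edge_aux P a b ha hab hmin
  refine ⟨he, ?_, ?_⟩
  · apply IsLeast.csInf_eq
    constructor
    · refine ⟨1, ![a, b], rfl, rfl, ?_, ?_⟩
      · intro i
        fin_cases i
        exact he
      · simp [l2_comm a b]
    · rintro L ⟨n, p, h0, hl, -, rfl⟩
      have := l2_path n p
      rwa [h0, hl, l2_comm] at this
  · simp only [l2, Prod.fst_sub, Prod.snd_sub]
    apply Real.sqrt_le_iff.2
    refine ⟨by positivity, ?_⟩
    have := mul_nonneg (abs_nonneg (a.1 - b.1)) (abs_nonneg (a.2 - b.2))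
    nlinarith [sq_abs (a.1 - b.1), sq_abs (a.2 - b.2)]
end
end

section
/- Let n ≥ 3 be an integer, δ = √2/n, and k = n − 3. Define points pᵢ = (i·δ²/(√2 − 2δ), i·δ) for 0 ≤ i ≤ k + 1 and qᵢ = pᵢ + (1 − δ, 2δ − 1) for 0 ≤ i ≤ k + 1, and let P = {p₀, …, p_{k+1}} ∪ {q₀, …, q_{k+1}}. Then for every 0 ≤ i ≤ k, the axis-aligned square Sᵢ of side length 1 − δ with center cᵢ = ((pᵢ)₁ + (1 − δ)/2, (pᵢ)₂ + δ − (1 − δ)/2) — equivalently, the closed L∞-ball of radius (1 − δ)/2 about cᵢ — has pᵢ on its west side, p_{i+1} on its north side, and qᵢ as its southeast vertex, and no point of P lies in the interior of Sᵢ. Consequently (pᵢ, p_{i+1}), (pᵢ, qᵢ), and (p_{i+1}, qᵢ) are all edges of the L∞-Delaunay graph of P. -/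
open Real

noncomputable section

/-- **Lemma (structure of the lower-bound example).** With `δ = √2/n`, `k = n − 3`,
`pᵢ = (i·δ²/(√2 − 2δ), i·δ)` and `qᵢ = pᵢ + (1 − δ, 2δ − 1)`, for each `0 ≤ i ≤ k` the
axis-aligned square of side `1 − δ` centered at
`cᵢ = ((pᵢ)₁ + (1 − δ)/2, (pᵢ)₂ + δ − (1 − δ)/2)` has `pᵢ` on its west side, `pᵢ₊₁` on
its north side, `qᵢ` as its southeast vertex, and no point of `P` in its interior; hence
`(pᵢ, pᵢ₊₁)`, `(pᵢ, qᵢ)` and `(pᵢ₊₁, qᵢ)` are edges of the `L∞`-Delaunay graph of `P`. -/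
theorem lower_bound_example_squares
    (n : ℕ) (hn : 3 ≤ n) (δ : ℝ) (hδ : δ = Real.sqrt 2 / n)
    (k : ℕ) (hk : k = n - 3)
    (p q : ℕ → ℝ × ℝ)
    (hp : ∀ i : ℕ, p i = ((i : ℝ) * δ ^ 2 / (Real.sqrt 2 - 2 * δ), (i : ℝ) * δ))
    (hq : ∀ i : ℕ, q i = ((p i).1 + (1 - δ), (p i).2 + (2 * δ - 1)))
    (P : Finset (ℝ × ℝ))
    (hP : P = (Finset.range (k + 2)).image p ∪ (Finset.range (k + 2)).image q) :
    ∀ i : ℕ, i ≤ k → ∀ c : ℝ × ℝ,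
      c = ((p i).1 + (1 - δ) / 2, (p i).2 + δ - (1 - δ) / 2) →
      ((p i).1 = c.1 - (1 - δ) / 2 ∧ |(p i).2 - c.2| ≤ (1 - δ) / 2) ∧
      ((p (i + 1)).2 = c.2 + (1 - δ) / 2 ∧ |(p (i + 1)).1 - c.1| ≤ (1 - δ) / 2) ∧
      q i = (c.1 + (1 - δ) / 2, c.2 - (1 - δ) / 2) ∧
      (∀ z ∈ P, (1 - δ) / 2 ≤ linf (z - c)) ∧
      IsDelaunayEdge linf P (p i) (p (i + 1)) ∧
      IsDelaunayEdge linf P (p i) (q i) ∧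
      IsDelaunayEdge linf P (p (i + 1)) (q i) := by
  have hn' : (3 : ℝ) ≤ n := by exact_mod_cast hn
  have hs0 : 0 < Real.sqrt 2 := by positivity
  have hs : Real.sqrt 2 < 3 / 2 := by
    rw [Real.sqrt_lt' (by norm_num)]; norm_num
  have hδ0 : 0 < δ := by rw [hδ]; positivity
  have hδn : δ * n = Real.sqrt 2 := by rw [hδ]; field_simp
  have hδ3 : 3 * δ ≤ Real.sqrt 2 := by nlinarith
  have hδh : δ < 1 / 2 := by linarith
  obtain ⟨a, ha⟩ : ∃ a, a = δ ^ 2 / (Real.sqrt 2 - 2 * δ) := ⟨_, rfl⟩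
  have hden : 0 < Real.sqrt 2 - 2 * δ := by linarith
  have ha0 : 0 ≤ a := by rw [ha]; positivity
  have haδ : a ≤ δ := by
    rw [ha, div_le_iff₀ hden]; nlinarith
  have hp' : ∀ i : ℕ, p i = ((i : ℝ) * a, (i : ℝ) * δ) := by
    intro i; rw [hp, ha, mul_div_assoc]
  have hq' : ∀ i : ℕ, q i = ((i : ℝ) * a + (1 - δ), (i : ℝ) * δ + (2 * δ - 1)) := by
    intro i; rw [hq, hp']
  clear hp hq ha
  intro i hi c hc
  have hc1 : c.1 = (i : ℝ) * a + (1 - δ) / 2 := by rw [hc, hp']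
  have hc2 : c.2 = (i : ℝ) * δ + δ - (1 - δ) / 2 := by rw [hc, hp']
  clear hc
  have hr : 0 < (1 - δ) / 2 := by linarith
  have hall : ∀ z ∈ P, (1 - δ) / 2 ≤ linf (z - c) := by
    intro z hz
    rw [hP, Finset.mem_union, Finset.mem_image, Finset.mem_image] at hz
    simp only [linf, Prod.fst_sub, Prod.snd_sub, hc1, hc2, le_max_iff, le_abs]
    rcases hz with ⟨j, -, rfl⟩ | ⟨j, -, rfl⟩
    · simp only [hp']
      rcases Nat.lt_or_ge i j with h | h
      · have h' : (i : ℝ) + 1 ≤ j := by exact_mod_cast h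
        right; left; nlinarith
      · have h' : (j : ℝ) ≤ i := by exact_mod_cast h
        left; right; nlinarith
    · simp only [hq']
      rcases Nat.lt_or_ge j i with h | h
      · have h' : (j : ℝ) + 1 ≤ i := by exact_mod_cast h
        right; right; nlinarith
      · have h' : (i : ℝ) ≤ j := by exact_mod_cast h
        left; left; nlinarith
  have h1 : linf (p i - c) = (1 - δ) / 2 := by
    apply le_antisymm _ (hall _ (by
      rw [hP]
      exact Finset.mem_union_left _ (Finset.mem_image_of_mem _ (by simp; omega))))
    simp only [linf, Prod.fst_sub, Prod.snd_sub, hc1, hc2, hp', max_le_iff, abs_le]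
    refine ⟨⟨?_, ?_⟩, ?_, ?_⟩ <;> linarith
  have h2 : linf (p (i + 1) - c) = (1 - δ) / 2 := by
    apply le_antisymm _ (hall _ (by
      rw [hP]
      exact Finset.mem_union_left _ (Finset.mem_image_of_mem _ (by simp; omega))))
    simp only [linf, Prod.fst_sub, Prod.snd_sub, hc1, hc2, hp', max_le_iff, abs_le]
    push_cast
    refine ⟨⟨?_, ?_⟩, ?_, ?_⟩ <;> linarith
  have h3 : linf (q i - c) = (1 - δ) / 2 := by
    apply le_antisymm _ (hall _ (by
      rw [hP]
      exact Finset.mem_union_right _ (Finset.mem_image_of_mem _ (by simp; omega))))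
    simp only [linf, Prod.fst_sub, Prod.snd_sub, hc1, hc2, hq', max_le_iff, abs_le]
    refine ⟨⟨?_, ?_⟩, ?_, ?_⟩ <;> linarith
  refine ⟨⟨?_, ?_⟩, ⟨?_, ?_⟩, ?_, hall, ⟨?_, c, _, hr, h1, h2, hall⟩,
    ⟨?_, c, _, hr, h1, h3, hall⟩, ⟨?_, c, _, hr, h2, h3, hall⟩⟩
  · rw [hp', hc1]; ring
  · exact (le_max_right _ _).trans h1.le
  · rw [hp', hc2]; push_cast; ring
  · exact (le_max_left _ _).trans h2.le
  · rw [hq', hc1, hc2]; ext <;> simp only <;> ring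
  · intro h
    have h' := congrArg Prod.snd h
    simp only [hp'] at h'
    push_cast at h'
    linarith
  · intro h
    have h' := congrArg Prod.fst h
    simp only [hp', hq'] at h'
    linarith
  · intro h
    have h' := congrArg Prod.snd h
    simp only [hp', hq'] at h'
    push_cast at h'
    linarith
end
end
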